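/- arXiv:math/0304381 — 5 statements merged into one kernel-verified Lean document; each statement's English description precedes it below -/
import Mathlib

section
/- Let a, b, c, d ∈ ℂ with a + b + c + d = 0, and let U ⊆ ℂ be an open set. Suppose y : ℂ → ℂ is differentiable on U and satisfies the Riccati equation x(x−1)·y'(x) = a·y(x)² + (b·x + c)·y(x) + d·x for all x ∈ U, and for every x ∈ U one has x ≠ 0, x ≠ 1 and y(x) ∉ {0, 1, x}. Then y solves P_VI(a²/2, −d²/2, (b+d)²/2, (1−(c+d+1)²)/2) on U. -/
/-- `y` solves the Painlevé VI equation with parameters `(α, β, γ, δ)` on `U`: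
`y` is twice differentiable on `U`, and at every `x ∈ U` we have `x ≠ 0`, `x ≠ 1`,
`y x ∉ {0, 1, x}` and the Painlevé VI equation holds. -/
def SolvesPVI (α β γ δ : ℂ) (U : Set ℂ) (y : ℂ → ℂ) : Prop :=
  (∀ x ∈ U, DifferentiableAt ℂ y x) ∧
  (∀ x ∈ U, DifferentiableAt ℂ (deriv y) x) ∧
  ∀ x ∈ U, x ≠ 0 ∧ x ≠ 1 ∧ y x ≠ 0 ∧ y x ≠ 1 ∧ y x ≠ x ∧
    deriv (deriv y) x =
      (1 / 2) * (1 / y x + 1 / (y x - 1) + 1 / (y x - x)) * (deriv y x) ^ 2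
        - (1 / x + 1 / (x - 1) + 1 / (y x - x)) * deriv y x
        + (y x * (y x - 1) * (y x - x) / (x ^ 2 * (x - 1) ^ 2)) *
            (α + β * x / (y x) ^ 2 + γ * (x - 1) / (y x - 1) ^ 2
              + δ * x * (x - 1) / (y x - x) ^ 2)

/-!
Write `P = y (y - 1) (y - x)`. Since `a + b + c + d = 0`, Lagrange interpolation of the right-hand
side of the Riccati equation at `y = 0, 1, x` gives constant residues:
`x (x - 1) y' = P u` with `u = A / y + B / (y - 1) + C / (y - x)` and
`A = d`, `B = -(b + d)`, `C = -(c + d)`. Differentiating this product produces the terms of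
Painlevé VI that are linear in `y'`. What remains is to expand `P u (s u - 2 v)` in partial
fractions, where `s = 1 / y + 1 / (y - 1) + 1 / (y - x)` and `v = -∂u/∂y`: it has only double
poles, with coefficients `-A² x`, `B² (x - 1)`, `-C² x (x - 1)`, and the value `(A + B + C)²` at
`y = ∞`. These give the four parameters, where `δ` is shifted by the term `C / (y - x)²` of `u'`.
-/

open Filter Topology

section Algebra

variable {K : Type*} [Field K]

/-- The cubic `y (y - 1) (y - x)`, whose roots are the excluded values of a Painlevé VI
transcendent. -/
def legendreCubic (x y : K) : K := y * (y - 1) * (y - x)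

/-- The rational function of `y` with simple poles at `0`, `1`, `x`, of residues `A`, `B`, `C`.
The Riccati equation is `x (x - 1) y'` equal to such a sum times `legendreCubic x y`. -/
def simplePoleSum (A B C x y : K) : K := A / y + B / (y - 1) + C / (y - x)

/-- The rational function of `y` with pure double poles at `0`, `1`, `x`, of coefficients
`A`, `B`, `C`. It is minus the `y`-derivative of `simplePoleSum`, and the potential term of
Painlevé VI is of this form up to a constant. -/
def doublePoleSum (A B C x y : K) : K := A / y ^ 2 + B / (y - 1) ^ 2 + C / (y - x) ^ 2

/-- The right-hand side of the Painlevé VI equation `y'' = painleveVIRhs α β γ δ x y y'`, over an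
arbitrary field, with the derivative as the last argument. -/
def painleveVIRhs (α β γ δ x y y' : K) : K :=
  (1 / 2) * (1 / y + 1 / (y - 1) + 1 / (y - x)) * y' ^ 2
    - (1 / x + 1 / (x - 1) + 1 / (y - x)) * y'
    + (y * (y - 1) * (y - x) / (x ^ 2 * (x - 1) ^ 2)) *
        (α + β * x / y ^ 2 + γ * (x - 1) / (y - 1) ^ 2 + δ * x * (x - 1) / (y - x) ^ 2)

variable {x y : K}

theorem painleveVIRhs_eq (α β γ δ x y y' : K) :
    painleveVIRhs α β γ δ x y y' =
      (1 / 2) * simplePoleSum 1 1 1 x y * y' ^ 2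
        - (1 / x + 1 / (x - 1) + 1 / (y - x)) * y'
        + legendreCubic x y / (x * (x - 1)) ^ 2 *
            (α + doublePoleSum (β * x) (γ * (x - 1)) (δ * (x * (x - 1))) x y) := by
  simp only [painleveVIRhs, simplePoleSum, legendreCubic, doublePoleSum]
  ring

theorem riccati_eq_legendreCubic_mul_simplePoleSum {a b c d : K} (habcd : a + b + c + d = 0)
    (hy0 : y ≠ 0) (hy1 : y ≠ 1) (hyx : y ≠ x) :
    a * y ^ 2 + (b * x + c) * y + d * x =
      legendreCubic x y * simplePoleSum d (-(b + d)) (-(c + d)) x y := by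
  have hy1' := sub_ne_zero.mpr hy1
  have hyx' := sub_ne_zero.mpr hyx
  obtain rfl : a = -(b + c + d) := by linear_combination habcd
  simp only [legendreCubic, simplePoleSum]
  field_simp
  ring

theorem legendreCubic_mul_simplePoleSum_mul_sub (A B C : K)
    (hy0 : y ≠ 0) (hy1 : y ≠ 1) (hyx : y ≠ x) :
    legendreCubic x y * simplePoleSum A B C x y *
        (simplePoleSum 1 1 1 x y * simplePoleSum A B C x y - 2 * doublePoleSum A B C x y) =
      (A + B + C) ^ 2 +
        doublePoleSum (-A ^ 2 * x) (B ^ 2 * (x - 1)) (-C ^ 2 * (x * (x - 1))) x y := by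
  have hy1' := sub_ne_zero.mpr hy1
  have hyx' := sub_ne_zero.mpr hyx
  simp only [legendreCubic, simplePoleSum, doublePoleSum]
  field_simp
  ring

theorem painleveVIRhs_eq_of_mul_eq [NeZero (2 : K)] {A B C y' : K} (hx0 : x ≠ 0) (hx1 : x ≠ 1)
    (hy0 : y ≠ 0) (hy1 : y ≠ 1) (hyx : y ≠ x)
    (hy' : x * (x - 1) * y' = legendreCubic x y * simplePoleSum A B C x y) :
    painleveVIRhs ((A + B + C) ^ 2 / 2) (-A ^ 2 / 2) (B ^ 2 / 2) ((1 - (C - 1) ^ 2) / 2) x y y' =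
      simplePoleSum 1 1 1 x y * y' ^ 2 - (1 / x + 1 / (x - 1) + 1 / (y - x)) * y'
        + legendreCubic x y / (x * (x - 1)) *
            (C / (y - x) ^ 2 - doublePoleSum A B C x y * y') := by
  have h2 : (2 : K) ≠ 0 := two_ne_zero
  have hT : x * (x - 1) ≠ 0 := mul_ne_zero hx0 (sub_ne_zero.mpr hx1)
  have expansion := legendreCubic_mul_simplePoleSum_mul_sub A B C hy0 hy1 hyx
  have potential :
      (A + B + C) ^ 2 / 2 + doublePoleSum (-A ^ 2 / 2 * x) (B ^ 2 / 2 * (x - 1))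
          ((1 - (C - 1) ^ 2) / 2 * (x * (x - 1))) x y =
        ((A + B + C) ^ 2 + doublePoleSum (-A ^ 2 * x) (B ^ 2 * (x - 1))
          (-C ^ 2 * (x * (x - 1))) x y) / 2 + C * (x * (x - 1)) / (y - x) ^ 2 := by
    simp only [doublePoleSum]
    field_simp
    ring
  rw [painleveVIRhs_eq, potential, ← expansion, eq_div_of_mul_eq hT ((mul_comm _ _).trans hy')]
  field_simp
  ring

end Algebra

section Derivatives

variable {𝕜 : Type*} [NontriviallyNormedField 𝕜] {x : 𝕜}

theorem hasDerivAt_of_mul_eventuallyEq {f g h : 𝕜 → 𝕜} {f' h' : 𝕜} (hf : HasDerivAt f f' x)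
    (hh : HasDerivAt h h' x) (hfx : f x ≠ 0) (hfg : ∀ᶠ t in 𝓝 x, f t * g t = h t) :
    HasDerivAt g ((h' - f' * g x) / f x) x := by
  have hg : g =ᶠ[𝓝 x] h / f := by
    filter_upwards [hfg, hf.continuousAt.eventually_ne hfx] with t ht hft
    exact eq_div_of_mul_eq hft ((mul_comm _ _).trans ht)
  refine ((hh.div hf hfx).congr_of_eventuallyEq hg).congr_deriv ?_
  rw [← hfg.self_of_nhds]
  field_simp

variable {y : 𝕜 → 𝕜} {p : 𝕜}

theorem hasDerivAt_legendreCubic (hy : HasDerivAt y p x)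
    (hy0 : y x ≠ 0) (hy1 : y x ≠ 1) (hyx : y x ≠ x) :
    HasDerivAt (fun t => legendreCubic t (y t))
      (legendreCubic x (y x) * (simplePoleSum 1 1 1 x (y x) * p - 1 / (y x - x))) x := by
  have hy1' := sub_ne_zero.mpr hy1
  have hyx' := sub_ne_zero.mpr hyx
  refine ((hy.mul (hy.sub_const 1)).mul (hy.sub (hasDerivAt_id x))).congr_deriv ?_
  simp only [legendreCubic, simplePoleSum, Pi.mul_apply, Pi.sub_apply, id_eq]
  field_simp
  ring

theorem hasDerivAt_simplePoleSum (A B C : 𝕜) (hy : HasDerivAt y p x)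
    (hy0 : y x ≠ 0) (hy1 : y x ≠ 1) (hyx : y x ≠ x) :
    HasDerivAt (fun t => simplePoleSum A B C t (y t))
      (C / (y x - x) ^ 2 - doublePoleSum A B C x (y x) * p) x := by
  have hA := (hasDerivAt_const x A).div hy hy0
  have hB := (hasDerivAt_const x B).div (hy.sub_const 1) (sub_ne_zero.mpr hy1)
  have hC := (hasDerivAt_const x C).div (hy.sub (hasDerivAt_id x)) (sub_ne_zero.mpr hyx)
  refine ((hA.add hB).add hC).congr_deriv ?_
  simp only [doublePoleSum, Pi.sub_apply, id_eq]
  ring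

variable {y' : 𝕜 → 𝕜}

theorem hasDerivAt_of_mul_eq_legendreCubic_mul_simplePoleSum {A B C : 𝕜}
    (hx0 : x ≠ 0) (hx1 : x ≠ 1) (hy0 : y x ≠ 0) (hy1 : y x ≠ 1) (hyx : y x ≠ x)
    (hy : HasDerivAt y (y' x) x)
    (hy' : ∀ᶠ t in 𝓝 x,
      t * (t - 1) * y' t = legendreCubic t (y t) * simplePoleSum A B C t (y t)) :
    HasDerivAt y'
      (simplePoleSum 1 1 1 x (y x) * y' x ^ 2 - (1 / x + 1 / (x - 1) + 1 / (y x - x)) * y' x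
        + legendreCubic x (y x) / (x * (x - 1)) *
            (C / (y x - x) ^ 2 - doublePoleSum A B C x (y x) * y' x)) x := by
  have hx1' := sub_ne_zero.mpr hx1
  have hT : HasDerivAt (fun t : 𝕜 => t * (t - 1)) (1 * (x - 1) + x * 1) x :=
    (hasDerivAt_id x).mul ((hasDerivAt_id x).sub_const 1)
  have hPu := (hasDerivAt_legendreCubic hy hy0 hy1 hyx).mul
    (hasDerivAt_simplePoleSum A B C hy hy0 hy1 hyx)
  refine (hasDerivAt_of_mul_eventuallyEq hT hPu (mul_ne_zero hx0 hx1') hy').congr_deriv ?_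
  rw [mul_right_comm (legendreCubic x (y x)), ← hy'.self_of_nhds]
  field_simp
  ring

theorem riccati_solves_painleveVI_general [NeZero (2 : 𝕜)] {a b c d : 𝕜}
    (habcd : a + b + c + d = 0) (hy : HasDerivAt y (y' x) x)
    (hric : ∀ᶠ t in 𝓝 x, t * (t - 1) * y' t = a * y t ^ 2 + (b * t + c) * y t + d * t)
    (hreg : x ≠ 0 ∧ x ≠ 1 ∧ y x ≠ 0 ∧ y x ≠ 1 ∧ y x ≠ x) :
    HasDerivAt y'
      (painleveVIRhs (a ^ 2 / 2) (-d ^ 2 / 2) ((b + d) ^ 2 / 2) ((1 - (c + d + 1) ^ 2) / 2)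
        x (y x) (y' x)) x := by
  obtain ⟨hx0, hx1, hy0, hy1, hyx⟩ := hreg
  have hy' : ∀ᶠ t in 𝓝 x, t * (t - 1) * y' t =
      legendreCubic t (y t) * simplePoleSum d (-(b + d)) (-(c + d)) t (y t) := by
    have hc := hy.continuousAt
    filter_upwards [hric, hc.eventually_ne hy0, hc.eventually_ne hy1,
      (hc.ne_iff_eventually_ne continuousAt_id).mp hyx] with t ht h0 h1 hne
    exact ht.trans (riccati_eq_legendreCubic_mul_simplePoleSum habcd h0 h1 hne)
  refine (hasDerivAt_of_mul_eq_legendreCubic_mul_simplePoleSum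
    hx0 hx1 hy0 hy1 hyx hy hy').congr_deriv ?_
  rw [← painleveVIRhs_eq_of_mul_eq hx0 hx1 hy0 hy1 hyx hy'.self_of_nhds]
  obtain rfl : a = d + -(b + d) + -(c + d) := by linear_combination habcd
  congr 1 <;> ring

end Derivatives

/-- **Lemma 1.** If `y` satisfies the Riccati equation
`x(x-1) y' = a y² + (b x + c) y + d x` on an open set `U` with `a + b + c + d = 0`,
and `x ≠ 0`, `x ≠ 1`, `y x ∉ {0, 1, x}` on `U`, then `y` solves
`P_VI(a²/2, -d²/2, (b+d)²/2, (1-(c+d+1)²)/2)` on `U`. -/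
theorem riccati_solves_painleveVI (a b c d : ℂ) (habcd : a + b + c + d = 0)
    (U : Set ℂ) (hU : IsOpen U) (y : ℂ → ℂ)
    (hy : ∀ x ∈ U, DifferentiableAt ℂ y x)
    (hric : ∀ x ∈ U,
      x * (x - 1) * deriv y x = a * (y x) ^ 2 + (b * x + c) * y x + d * x)
    (hreg : ∀ x ∈ U, x ≠ 0 ∧ x ≠ 1 ∧ y x ≠ 0 ∧ y x ≠ 1 ∧ y x ≠ x) :
    SolvesPVI (a ^ 2 / 2) (-d ^ 2 / 2) ((b + d) ^ 2 / 2)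
      ((1 - (c + d + 1) ^ 2) / 2) U y := by
  have hy'' x (hx : x ∈ U) := riccati_solves_painleveVI_general habcd (hy x hx).hasDerivAt
    (eventually_of_mem (hU.mem_nhds hx) hric) (hreg x hx)
  refine ⟨hy, fun x hx => (hy'' x hx).differentiableAt, fun x hx => ?_⟩
  obtain ⟨hx0, hx1, hy0, hy1, hyx⟩ := hreg x hx
  exact ⟨hx0, hx1, hy0, hy1, hyx, (hy'' x hx).deriv⟩
end

section
/- The rational function y(x) = (1/2)·x·(42x³ − 70x² + 35x − 5) / ((2x−1)(7x²−7x+1)) solves P_VI(18, −25/2, 25/2, −4) on any open set U ⊆ ℂ on which x ≠ 0, x ≠ 1, (2x−1)(7x²−7x+1) ≠ 0, and y(x) ∉ {0, 1, x}. -/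
/-- The rational function from the Example. -/
noncomputable def yEx : ℂ → ℂ := fun x =>
  (1 / 2) * (x * (42 * x ^ 3 - 70 * x ^ 2 + 35 * x - 5))
    / ((2 * x - 1) * (7 * x ^ 2 - 7 * x + 1))

/-!
The parameters `(18, -25/2, 25/2, -4)` lie on a wall where Painlevé VI admits Riccati solutions:
every solution of
`x (x - 1) y' = κ₀ (y - 1) (y - x) + κ₁ y (y - x) + κₓ y (y - 1)`
solves `P_VI((κ₀ + κ₁ + κₓ)²/2, -κ₀²/2, κ₁²/2, (1 - (κₓ - 1)²)/2)`, as one sees by differentiating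
the Riccati equation once. The rational function of the example solves the Riccati equation with
`(κ₀, κ₁, κₓ) = (-5, -5, 4)`.
-/

/-- The right-hand side of the Riccati equation `y' = riccatiField κ₀ κ₁ κₓ x y`, whose solutions
are the classical (hypergeometric) solutions of Painlevé VI. The exponents are normalized so that
`x (x - 1) y' / (y (y - 1) (y - x)) = κ₀ / y + κ₁ / (y - 1) + κₓ / (y - x)`. -/
def riccatiField {K : Type*} [Field K] (κ₀ κ₁ κₓ x y : K) : K :=
  (κ₀ * (y - 1) * (y - x) + κ₁ * y * (y - x) + κₓ * y * (y - 1)) / (x * (x - 1))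

/-- The total derivative `∂F/∂x + p ∂F/∂y` of `F = riccatiField κ₀ κ₁ κₓ` at the point `(x, y)`,
where `p` stands for `y'`. -/
def riccatiFieldTotalDeriv {K : Type*} [Field K] (κ₀ κ₁ κₓ x y p : K) : K :=
  (κ₀ * (p * (y - x) + (y - 1) * (p - 1)) + κ₁ * (p * (y - x) + y * (p - 1))
      + κₓ * (p * (y - 1) + y * p)
    - (2 * x - 1) * riccatiField κ₀ κ₁ κₓ x y) / (x * (x - 1))

section NormedField

variable {𝕜 : Type*} [NontriviallyNormedField 𝕜] {κ₀ κ₁ κₓ : 𝕜}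

theorem hasDerivAt_riccatiField {y : 𝕜 → 𝕜} {y' x : 𝕜} (hy : HasDerivAt y y' x)
    (hx0 : x ≠ 0) (hx1 : x ≠ 1) :
    HasDerivAt (fun z => riccatiField κ₀ κ₁ κₓ z (y z))
      (riccatiFieldTotalDeriv κ₀ κ₁ κₓ x (y x) y') x := by
  have hden : x * (x - 1) ≠ 0 := mul_ne_zero hx0 (sub_ne_zero.2 hx1)
  have hid := hasDerivAt_id' x
  have hy1 := hy.sub_const 1
  have hyx := hy.fun_sub hid
  have hnum := (((hy1.const_mul κ₀).fun_mul hyx).fun_add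
    ((hy.const_mul κ₁).fun_mul hyx)).fun_add ((hy.const_mul κₓ).fun_mul hy1)
  refine (hnum.fun_div (hid.fun_mul (hid.sub_const 1)) hden).congr_deriv ?_
  rw [riccatiFieldTotalDeriv, riccatiField, div_eq_div_iff (pow_ne_zero 2 hden) hden]
  field_simp
  ring

theorem hasDerivAt_div_riccatiField {N D : 𝕜 → 𝕜} {N' D' x : 𝕜} (hN : HasDerivAt N N' x)
    (hD : HasDerivAt D D' x) (hx0 : x ≠ 0) (hx1 : x ≠ 1) (hDx : D x ≠ 0)
    (h : x * (x - 1) * (N' * D x - N x * D') =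
      κ₀ * (N x - D x) * (N x - x * D x) + κ₁ * N x * (N x - x * D x)
        + κₓ * N x * (N x - D x)) :
    HasDerivAt (fun z => N z / D z) (riccatiField κ₀ κ₁ κₓ x (N x / D x)) x := by
  have hx1' : x - 1 ≠ 0 := sub_ne_zero.2 hx1
  refine (hN.fun_div hD hDx).congr_deriv ?_
  rw [riccatiField]
  field_simp
  linear_combination h

end NormedField

theorem riccatiFieldTotalDeriv_eq_painleveVI {K : Type*} [Field K] {κ₀ κ₁ κₓ x y p : K}
    (h2 : (2 : K) ≠ 0) (hx0 : x ≠ 0) (hx1 : x ≠ 1) (hy0 : y ≠ 0) (hy1 : y ≠ 1) (hyx : y ≠ x)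
    (hp : p = riccatiField κ₀ κ₁ κₓ x y) :
    riccatiFieldTotalDeriv κ₀ κ₁ κₓ x y p =
      (1 / 2) * (1 / y + 1 / (y - 1) + 1 / (y - x)) * p ^ 2
        - (1 / x + 1 / (x - 1) + 1 / (y - x)) * p
        + (y * (y - 1) * (y - x) / (x ^ 2 * (x - 1) ^ 2)) *
            ((κ₀ + κ₁ + κₓ) ^ 2 / 2 + -κ₀ ^ 2 / 2 * x / y ^ 2
              + κ₁ ^ 2 / 2 * (x - 1) / (y - 1) ^ 2
              + (1 - (κₓ - 1) ^ 2) / 2 * x * (x - 1) / (y - x) ^ 2) := by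
  have hx1' : x - 1 ≠ 0 := sub_ne_zero.2 hx1
  have hy1' : y - 1 ≠ 0 := sub_ne_zero.2 hy1
  have hyx' : y - x ≠ 0 := sub_ne_zero.2 hyx
  rw [riccatiFieldTotalDeriv, hp, riccatiField]
  field_simp
  ring

theorem solvesPVI_of_riccati {κ₀ κ₁ κₓ : ℂ} {U : Set ℂ} {y : ℂ → ℂ} (hU : IsOpen U)
    (hreg : ∀ x ∈ U, x ≠ 0 ∧ x ≠ 1 ∧ y x ≠ 0 ∧ y x ≠ 1 ∧ y x ≠ x)
    (hy : ∀ x ∈ U, HasDerivAt y (riccatiField κ₀ κ₁ κₓ x (y x)) x) :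
    SolvesPVI ((κ₀ + κ₁ + κₓ) ^ 2 / 2) (-κ₀ ^ 2 / 2) (κ₁ ^ 2 / 2) ((1 - (κₓ - 1) ^ 2) / 2)
      U y := by
  have hderiv : ∀ x ∈ U, deriv y =ᶠ[nhds x] fun z => riccatiField κ₀ κ₁ κₓ z (y z) :=
    fun x hx => Filter.eventually_of_mem (hU.mem_nhds hx) fun z hz => (hy z hz).deriv
  have hy' : ∀ x ∈ U, HasDerivAt (deriv y)
      (riccatiFieldTotalDeriv κ₀ κ₁ κₓ x (y x) (riccatiField κ₀ κ₁ κₓ x (y x))) x := fun x hx =>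
    (hasDerivAt_riccatiField (hy x hx) (hreg x hx).1 (hreg x hx).2.1).congr_of_eventuallyEq
      (hderiv x hx)
  refine ⟨fun x hx => (hy x hx).differentiableAt, fun x hx => (hy' x hx).differentiableAt,
    fun x hx => ?_⟩
  obtain ⟨hx0, hx1, hy0, hy1, hyx⟩ := hreg x hx
  refine ⟨hx0, hx1, hy0, hy1, hyx, ?_⟩
  rw [(hy' x hx).deriv, (hy x hx).deriv]
  exact riccatiFieldTotalDeriv_eq_painleveVI two_ne_zero hx0 hx1 hy0 hy1 hyx rfl

theorem hasDerivAt_yEx {x : ℂ} (hx0 : x ≠ 0) (hx1 : x ≠ 1)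
    (hden : (2 * x - 1) * (7 * x ^ 2 - 7 * x + 1) ≠ 0) :
    HasDerivAt yEx (riccatiField (-5) (-5) 4 x (yEx x)) x := by
  have hid := hasDerivAt_id' x
  have hnum : HasDerivAt (fun z : ℂ => 1 / 2 * (z * (42 * z ^ 3 - 70 * z ^ 2 + 35 * z - 5)))
      (84 * x ^ 3 - 105 * x ^ 2 + 35 * x - 5 / 2) x := by
    have hcubic := ((((hid.fun_pow 3).const_mul 42).fun_sub ((hid.fun_pow 2).const_mul 70)).fun_add
      (hid.const_mul 35)).sub_const 5
    exact ((hid.fun_mul hcubic).const_mul (1 / 2)).congr_deriv (by norm_num; ring)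
  have hdenom : HasDerivAt (fun z : ℂ => (2 * z - 1) * (7 * z ^ 2 - 7 * z + 1))
      (42 * x ^ 2 - 42 * x + 9) x := by
    have hquadratic := (((hid.fun_pow 2).const_mul 7).fun_sub (hid.const_mul 7)).add_const 1
    exact (((hid.const_mul 2).sub_const 1).fun_mul hquadratic).congr_deriv (by norm_num; ring)
  exact hasDerivAt_div_riccatiField hnum hdenom hx0 hx1 hden (by ring)

/-- The rational function `y(x) = (1/2)·x(42x³-70x²+35x-5)/((2x-1)(7x²-7x+1))`
solves `P_VI(18, -25/2, 25/2, -4)` on any open set avoiding the singularities. -/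
theorem example_solves_painleveVI (U : Set ℂ) (hU : IsOpen U)
    (hreg : ∀ x ∈ U, x ≠ 0 ∧ x ≠ 1 ∧ (2 * x - 1) * (7 * x ^ 2 - 7 * x + 1) ≠ 0 ∧
      yEx x ≠ 0 ∧ yEx x ≠ 1 ∧ yEx x ≠ x) :
    SolvesPVI 18 (-25 / 2) (25 / 2) (-4) U yEx := by
  have hsolves : SolvesPVI ((-5 + -5 + 4) ^ 2 / 2) (-(-5) ^ 2 / 2) ((-5) ^ 2 / 2)
      ((1 - (4 - 1) ^ 2) / 2) U yEx := by
    refine solvesPVI_of_riccati hU (fun x hx => ?_) fun x hx => ?_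
    · obtain ⟨hx0, hx1, -, hy⟩ := hreg x hx
      exact ⟨hx0, hx1, hy⟩
    · obtain ⟨hx0, hx1, hden, -⟩ := hreg x hx
      exact hasDerivAt_yEx hx0 hx1 hden
  convert hsolves using 1 <;> norm_num
end

section
/- Let k, μ, s ∈ ℂ with s not a nonpositive integer. Define y₁(x) = x·(1 + (μ(1−x)/s)·F(k+1, 1−μ, s+1, x)/F(k, −μ, s, x)). Let U ⊆ ℂ be an open subset of the unit disc {|x| < 1} on which x ≠ 0, x ≠ 1, F(k, −μ, s, x) ≠ 0, and y₁(x) ∉ {0, 1, x}. Then y₁ solves P_VI(k²/2, −(μ+s)²/2, (k−s+1)²/2, (1−μ²)/2) on U. -/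
/-- The Gauss hypergeometric series `F(a, b, c, x) = Σ (a)ₙ(b)ₙ/(c)ₙ · xⁿ/n!`,
where `(a)ₙ` is the ascending Pochhammer symbol. -/
noncomputable def hypF (a b c x : ℂ) : ℂ :=
  ∑' n : ℕ,
    ((ascPochhammer ℂ n).eval a * (ascPochhammer ℂ n).eval b / (ascPochhammer ℂ n).eval c)
      * x ^ n / (n.factorial : ℂ)

/-- The solution `y₁(k, μ, s)`. -/
noncomputable def y1 (k μ s : ℂ) : ℂ → ℂ := fun x =>
  x * (1 + (μ * (1 - x) / s) * hypF (k + 1) (1 - μ) (s + 1) x / hypF k (-μ) s x)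

/-!
The Gauss contiguity relations make `f = F(k, -μ, s, ·)` and `h = (μ/s) F(k+1, 1-μ, s+1, ·)`
satisfy a first order linear system, and a linear system in two unknowns induces a Riccati equation
on the projective coordinate `h / f`, hence on `y₁ = x (1 + (1 - x) h / f)`. It is one of the
Riccati equations `x (x - 1) y' = a y² + ((b + c) x - (a + c)) y - b x`, all of whose solutions
solve Painlevé VI with `(α, β, γ, δ) = (a²/2, -b²/2, c²/2, (1 - d²)/2)` where `a + b + c + d = 1`.
-/

section PowerSeries

variable {𝕜 F : Type*} [NontriviallyNormedField 𝕜] [NormedAddCommGroup F] [NormedSpace 𝕜 F]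
  [CompleteSpace F] {f : 𝕜 → F} {p : FormalMultilinearSeries 𝕜 𝕜 F} {x y : 𝕜} {r : ENNReal}

theorem hasSum_deriv_of_hasFPowerSeriesOnBall (hf : HasFPowerSeriesOnBall f p x r)
    (hy : y ∈ Metric.eball 0 r) :
    HasSum (fun n ↦ y ^ n • (n + 1) • p.coeff (n + 1)) (deriv f (x + y)) := by
  have h := (hf.fderiv.hasSum hy).mapL (ContinuousLinearMap.apply 𝕜 F (1 : 𝕜))
  simpa only [FormalMultilinearSeries.apply_eq_pow_smul_coeff, ContinuousLinearMap.apply_apply,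
    smul_apply, FormalMultilinearSeries.derivSeries_coeff_one, fderiv_apply_one_eq_deriv] using h

theorem hasSum_smul_deriv_of_hasFPowerSeriesOnBall (hf : HasFPowerSeriesOnBall f p x r)
    (hy : y ∈ Metric.eball 0 r) :
    HasSum (fun n ↦ y ^ n • n • p.coeff n) (y • deriv f (x + y)) := by
  have h : HasSum (fun n ↦ y ^ (n + 1) • (n + 1) • p.coeff (n + 1)) (y • deriv f (x + y)) :=
    ((hasSum_deriv_of_hasFPowerSeriesOnBall hf hy).const_smul y).congr_fun fun n ↦ by
      rw [pow_succ', mul_smul]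
  simpa using h.zero_add (f := fun n ↦ y ^ n • n • p.coeff n)

end PowerSeries

section Coefficients

theorem ascPochhammer_eval_succ_left {R : Type*} [CommSemiring R] (a : R) (n : ℕ) :
    (ascPochhammer R (n + 1)).eval a = a * (ascPochhammer R n).eval (a + 1) := by
  simp [ascPochhammer_succ_left, Polynomial.eval_comp]

variable {𝕂 : Type*} [Field 𝕂]

theorem ascPochhammer_eval_add_one {n : ℕ} {a : 𝕂} (ha : a ≠ 0) :
    (ascPochhammer 𝕂 n).eval (a + 1) = (ascPochhammer 𝕂 n).eval a * (a + n) / a := by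
  rw [eq_div_iff ha, ← ascPochhammer_succ_eval, ascPochhammer_eval_succ_left, mul_comm]

variable (a b c : 𝕂) (n : ℕ)

variable {c} in
theorem add_mul_ordinaryHypergeometricCoefficient_add_one (hc : ∀ m : ℕ, c ≠ -m) :
    (c + n) * ordinaryHypergeometricCoefficient a b (c + 1) n =
      c * ordinaryHypergeometricCoefficient a b c n := by
  have hc₀ : c ≠ 0 := by simpa using hc 0
  have hcn : c + n ≠ 0 := fun h ↦ hc n (eq_neg_of_add_eq_zero_left h)
  simp only [ordinaryHypergeometricCoefficient, ascPochhammer_eval_add_one hc₀]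
  field_simp

variable [CharZero 𝕂]

theorem succ_mul_ordinaryHypergeometricCoefficient_succ :
    (n + 1) * ordinaryHypergeometricCoefficient a b c (n + 1) =
      a * b / c * ordinaryHypergeometricCoefficient (a + 1) (b + 1) (c + 1) n := by
  have hn : (n : 𝕂) + 1 ≠ 0 := n.cast_add_one_ne_zero
  simp only [ordinaryHypergeometricCoefficient, ascPochhammer_eval_succ_left, Nat.factorial_succ,
    Nat.cast_mul, Nat.cast_succ, mul_inv]
  field_simp

theorem ordinaryHypergeometricCoefficient_add_one_add_one_sub :
    ordinaryHypergeometricCoefficient (a + 1) (b + 1) c (n + 1) -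
        ordinaryHypergeometricCoefficient a b c (n + 1) =
      (n + (a + b + 1)) / c * ordinaryHypergeometricCoefficient (a + 1) (b + 1) (c + 1) n := by
  have hn : (n : 𝕂) + 1 ≠ 0 := n.cast_add_one_ne_zero
  simp only [ordinaryHypergeometricCoefficient, ascPochhammer_eval_succ_left a,
    ascPochhammer_eval_succ_left b, ascPochhammer_eval_succ_left c,
    ascPochhammer_succ_eval n (a + 1), ascPochhammer_succ_eval n (b + 1), Nat.factorial_succ,
    Nat.cast_mul, Nat.cast_succ, mul_inv]
  field_simp
  ring

end Coefficients

section Hypergeometric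

theorem one_le_radius_ordinaryHypergeometricSeries {𝕂 : Type*} (𝔸 : Type*) [RCLike 𝕂]
    [NormedDivisionRing 𝔸] [NormedAlgebra 𝕂 𝔸] (a b c : 𝕂) :
    1 ≤ (ordinaryHypergeometricSeries 𝔸 a b c).radius := by
  by_cases! h : ∀ m : ℕ, (m : 𝕂) ≠ -a ∧ (m : 𝕂) ≠ -b ∧ (m : 𝕂) ≠ -c
  · exact (ordinaryHypergeometricSeries_radius_eq_one 𝔸 a b c h).ge
  · obtain ⟨m, hm⟩ := h
    have habc : (m : 𝕂) = -a ∨ (m : 𝕂) = -b ∨ (m : 𝕂) = -c := by tauto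
    rw [FormalMultilinearSeries.radius_eq_top_of_forall_image_add_eq_zero _ (m + 1) fun n ↦
      ordinaryHypergeometricSeries_eq_zero_of_neg_nat a b c habc (by lia)]
    exact le_top

variable {𝕂 : Type*} [RCLike 𝕂] (a b c : 𝕂) {x : 𝕂}

theorem hasFPowerSeriesOnBall_ordinaryHypergeometric :
    HasFPowerSeriesOnBall (₂F₁ a b c) (ordinaryHypergeometricSeries 𝕂 a b c) 0 1 :=
  have hr := one_le_radius_ordinaryHypergeometricSeries 𝕂 a b c
  ((ordinaryHypergeometricSeries 𝕂 a b c).hasFPowerSeriesOnBall (one_pos.trans_le hr)).mono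
    one_pos hr

theorem hasSum_ordinaryHypergeometric (hx : ‖x‖ < 1) :
    HasSum (fun n ↦ ordinaryHypergeometricCoefficient a b c n * x ^ n) (₂F₁ a b c x) := by
  have h := (hasFPowerSeriesOnBall_ordinaryHypergeometric a b c).hasSum
    (y := x) (by simpa [← ofReal_norm] using hx)
  simpa only [zero_add, ordinaryHypergeometricSeries_apply_eq, smul_eq_mul] using h

theorem hasSum_mul_deriv_ordinaryHypergeometric (hx : ‖x‖ < 1) :
    HasSum (fun n : ℕ ↦ n * ordinaryHypergeometricCoefficient a b c n * x ^ n)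
      (x * deriv (₂F₁ a b c) x) := by
  have h := hasSum_smul_deriv_of_hasFPowerSeriesOnBall
    (hasFPowerSeriesOnBall_ordinaryHypergeometric a b c)
    (y := x) (by simpa [← ofReal_norm] using hx)
  simpa [ordinaryHypergeometricSeries, mul_comm] using h

theorem hasDerivAt_ordinaryHypergeometric (hx : ‖x‖ < 1) :
    HasDerivAt (₂F₁ a b c) (a * b / c * ₂F₁ (a + 1) (b + 1) (c + 1) x) x := by
  have hF := hasFPowerSeriesOnBall_ordinaryHypergeometric a b c
  have hx' : x ∈ Metric.eball 0 1 := by simpa [← ofReal_norm] using hx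
  have hF' : HasSum (fun n ↦ x ^ n * ((n + 1) * ordinaryHypergeometricCoefficient a b c (n + 1)))
      (deriv (₂F₁ a b c) x) := by
    simpa [ordinaryHypergeometricSeries] using hasSum_deriv_of_hasFPowerSeriesOnBall hF hx'
  have hG := (hasSum_ordinaryHypergeometric (a + 1) (b + 1) (c + 1) hx).mul_left (a * b / c)
  have hd := hF.differentiableOn.differentiableAt (Metric.isOpen_eball.mem_nhds hx')
  refine hd.hasDerivAt.congr_deriv (hF'.unique (hG.congr_fun fun n ↦ ?_))
  rw [succ_mul_ordinaryHypergeometricCoefficient_succ]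
  ring

variable {c}

theorem mul_deriv_add_mul_ordinaryHypergeometric_add_one_right (hc : ∀ m : ℕ, c ≠ -m)
    (hx : ‖x‖ < 1) :
    x * deriv (₂F₁ a b (c + 1)) x + c * ₂F₁ a b (c + 1) x = c * ₂F₁ a b c x := by
  have h := (hasSum_mul_deriv_ordinaryHypergeometric a b (c + 1) hx).add
    ((hasSum_ordinaryHypergeometric a b (c + 1) hx).mul_left c)
  refine h.unique (((hasSum_ordinaryHypergeometric a b c hx).mul_left c).congr_fun fun n ↦ ?_)
  linear_combination x ^ n * add_mul_ordinaryHypergeometricCoefficient_add_one a b n hc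

theorem mul_ordinaryHypergeometric_add_one_add_one_sub (hc : c ≠ 0) (hx : ‖x‖ < 1) :
    c * (₂F₁ (a + 1) (b + 1) c x - ₂F₁ a b c x) =
      x * (x * deriv (₂F₁ (a + 1) (b + 1) (c + 1)) x +
        (a + b + 1) * ₂F₁ (a + 1) (b + 1) (c + 1) x) := by
  have hG := ((hasSum_mul_deriv_ordinaryHypergeometric (a + 1) (b + 1) (c + 1) hx).add
    ((hasSum_ordinaryHypergeometric (a + 1) (b + 1) (c + 1) hx).mul_left (a + b + 1))).mul_left x
  have hF := ((hasSum_ordinaryHypergeometric (a + 1) (b + 1) c hx).sub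
    (hasSum_ordinaryHypergeometric a b c hx)).mul_left c
  have hF' := (hasSum_nat_add_iff' 1).2 hF
  simp only [Finset.sum_range_one, ordinaryHypergeometricCoefficient, ascPochhammer_zero,
    Polynomial.eval_one, sub_self, mul_zero, sub_zero] at hF'
  refine hF'.unique (hG.congr_fun fun n ↦ ?_)
  have h := ordinaryHypergeometricCoefficient_add_one_add_one_sub a b c n
  rw [div_mul_eq_mul_div, eq_div_iff hc] at h
  linear_combination x ^ (n + 1) * h

theorem mul_one_sub_mul_deriv_ordinaryHypergeometric_add_one (hc : ∀ m : ℕ, c ≠ -m)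
    (hx : ‖x‖ < 1) :
    x * (1 - x) * deriv (₂F₁ (a + 1) (b + 1) (c + 1)) x =
      c * ₂F₁ a b c x - (c - (a + b + 1) * x) * ₂F₁ (a + 1) (b + 1) (c + 1) x := by
  have hc₀ : c ≠ 0 := by simpa using hc 0
  linear_combination mul_deriv_add_mul_ordinaryHypergeometric_add_one_right (a + 1) (b + 1) hc hx +
    mul_ordinaryHypergeometric_add_one_add_one_sub a b hc₀ hx

end Hypergeometric

section Riccati

/-- The right-hand side of Painlevé VI, as a function of the values `y` and `p` of the solution and
of its derivative at `x`. -/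
def painleveVIRHS {K : Type*} [Field K] (α β γ δ x y p : K) : K :=
  (1 / 2) * (1 / y + 1 / (y - 1) + 1 / (y - x)) * p ^ 2
    - (1 / x + 1 / (x - 1) + 1 / (y - x)) * p
    + (y * (y - 1) * (y - x) / (x ^ 2 * (x - 1) ^ 2)) *
        (α + β * x / y ^ 2 + γ * (x - 1) / (y - 1) ^ 2 + δ * x * (x - 1) / (y - x) ^ 2)

/-- The right-hand side of the Riccati equation whose solutions solve Painlevé VI. If
`a + b + c + d = 1`, it equals
`y (y - 1) (y - x) / (x (x - 1)) * (-b / y - c / (y - 1) + (1 - d) / (y - x))`, and the residues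
`-b`, `-c`, `1 - d` determine the Painlevé parameters `β`, `γ`, `δ`. -/
def painleveVIRiccati {K : Type*} [Field K] (a b c x y : K) : K :=
  (a * y ^ 2 + ((b + c) * x - (a + c)) * y - b * x) / (x * (x - 1))

theorem painleveVIRHS_painleveVIRiccati {K : Type*} [Field K] [NeZero (2 : K)] {a b c d x y p : K}
    (habcd : a + b + c + d = 1) (hx₀ : x ≠ 0) (hx₁ : x ≠ 1) (hy₀ : y ≠ 0) (hy₁ : y ≠ 1)
    (hyx : y ≠ x) (hp : p = painleveVIRiccati a b c x y) :
    painleveVIRHS (a ^ 2 / 2) (-b ^ 2 / 2) (c ^ 2 / 2) ((1 - d ^ 2) / 2) x y p =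
      ((2 * a * y + (b + c) * x - (a + c)) * p + (b + c) * y - b - (2 * x - 1) * p) /
        (x * (x - 1)) := by
  obtain rfl : d = 1 - a - b - c := by linear_combination habcd
  have h₂ : (2 : K) ≠ 0 := two_ne_zero
  have hx₁ := sub_ne_zero.2 hx₁
  have hy₁ := sub_ne_zero.2 hy₁
  have hyx := sub_ne_zero.2 hyx
  rw [hp, painleveVIRHS, painleveVIRiccati]
  field_simp
  ring

theorem hasDerivAt_painleveVIRiccati_comp {𝕜 : Type*} [NontriviallyNormedField 𝕜] {a b c x p : 𝕜}
    {y : 𝕜 → 𝕜} (hx₀ : x ≠ 0) (hx₁ : x ≠ 1) (hy : HasDerivAt y p x) :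
    HasDerivAt (fun z ↦ painleveVIRiccati a b c z (y z))
      (((2 * a * y x + (b + c) * x - (a + c)) * p + (b + c) * y x - b
        - (2 * x - 1) * painleveVIRiccati a b c x (y x)) / (x * (x - 1))) x := by
  have hx₁ := sub_ne_zero.2 hx₁
  have hid := hasDerivAt_id' x
  have hnum := (((hy.fun_pow 2).const_mul a).fun_add
    (((hid.const_mul (b + c)).sub_const (a + c)).fun_mul hy)).fun_sub (hid.const_mul b)
  have hden := hid.fun_mul (hid.sub_const 1)
  refine (hnum.fun_div hden (mul_ne_zero hx₀ hx₁)).congr_deriv ?_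
  rw [painleveVIRiccati]
  field_simp
  ring

theorem solvesPVI_of_hasDerivAt_painleveVIRiccati {a b c d : ℂ} (habcd : a + b + c + d = 1)
    {U : Set ℂ} (hU : IsOpen U) {y : ℂ → ℂ}
    (hreg : ∀ x ∈ U, x ≠ 0 ∧ x ≠ 1 ∧ y x ≠ 0 ∧ y x ≠ 1 ∧ y x ≠ x)
    (hy : ∀ x ∈ U, HasDerivAt y (painleveVIRiccati a b c x (y x)) x) :
    SolvesPVI (a ^ 2 / 2) (-b ^ 2 / 2) (c ^ 2 / 2) ((1 - d ^ 2) / 2) U y := by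
  have hy' (x) (hx : x ∈ U) := (hasDerivAt_painleveVIRiccati_comp (hreg x hx).1 (hreg x hx).2.1
    (hy x hx)).congr_of_eventuallyEq
      ((hU.eventually_mem hx).mono fun z hz ↦ (hy z hz).deriv)
  refine ⟨fun x hx ↦ (hy x hx).differentiableAt, fun x hx ↦ (hy' x hx).differentiableAt,
    fun x hx ↦ ?_⟩
  obtain ⟨hx₀, hx₁, hy₀, hy₁, hyx⟩ := hreg x hx
  refine ⟨hx₀, hx₁, hy₀, hy₁, hyx, ?_⟩
  rw [(hy' x hx).deriv, (hy x hx).deriv]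
  exact (painleveVIRHS_painleveVIRiccati habcd hx₀ hx₁ hy₀ hy₁ hyx rfl).symm

theorem hasDerivAt_painleveVIRiccati_of_linear_system {𝕜 : Type*} [NontriviallyNormedField 𝕜]
    {k μ s x h' : 𝕜} {f h : 𝕜 → 𝕜} (hx₀ : x ≠ 0) (hx₁ : x ≠ 1) (hfx : f x ≠ 0)
    (hf : HasDerivAt f (-k * h x) x) (hh : HasDerivAt h h' x)
    (hlin : x * (1 - x) * h' = μ * f x - (s - (k - μ + 1) * x) * h x) :
    HasDerivAt (fun z ↦ z * (1 + (1 - z) * h z / f z))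
      (painleveVIRiccati (-k) (μ + s) (k - s + 1) x (x * (1 + (1 - x) * h x / f x))) x := by
  have hx₁ := sub_ne_zero.2 hx₁
  have hid := hasDerivAt_id' x
  refine (hid.fun_mul ((((hid.const_sub 1).fun_mul hh).fun_div hf hfx).const_add 1)).congr_deriv ?_
  rw [painleveVIRiccati]
  field_simp
  linear_combination f x * (x - 1) * hlin

end Riccati

theorem hypF_eq_ordinaryHypergeometric (a b c : ℂ) : hypF a b c = ₂F₁ a b c := by
  ext x
  rw [ordinaryHypergeometric_eq_tsum, hypF]
  refine tsum_congr fun n ↦ ?_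
  rw [smul_eq_mul]
  ring

theorem hasDerivAt_y1 {k μ s : ℂ} (hs : ∀ m : ℕ, s ≠ -m) {x : ℂ} (hx : ‖x‖ < 1) (hx₀ : x ≠ 0)
    (hF : hypF k (-μ) s x ≠ 0) :
    HasDerivAt (y1 k μ s) (painleveVIRiccati (-k) (μ + s) (k - s + 1) x (y1 k μ s x)) x := by
  have hx₁ : x ≠ 1 := by rintro rfl; simp at hx
  have hy : y1 k μ s = fun z ↦ z * (1 + (1 - z) * (μ / s * ₂F₁ (k + 1) (-μ + 1) (s + 1) z) /
      ₂F₁ k (-μ) s z) := by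
    ext z
    rw [y1, hypF_eq_ordinaryHypergeometric, hypF_eq_ordinaryHypergeometric,
      sub_eq_neg_add 1 μ]
    ring
  rw [hypF_eq_ordinaryHypergeometric] at hF
  have hf := hasDerivAt_ordinaryHypergeometric k (-μ) s hx
  have hG := hasDerivAt_ordinaryHypergeometric (k + 1) (-μ + 1) (s + 1) hx
  rw [hy]
  refine hasDerivAt_painleveVIRiccati_of_linear_system hx₀ hx₁ hF (hf.congr_deriv (by ring))
    (hG.differentiableAt.hasDerivAt.const_mul (μ / s)) ?_
  have hs₀ : s ≠ 0 := by simpa using hs 0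
  have hGx := mul_one_sub_mul_deriv_ordinaryHypergeometric_add_one k (-μ) hs hx
  field_simp
  linear_combination μ * hGx

/-- **First case** `a = -k`: the function
`y₁(x) = x(1 + (μ(1-x)/s)·F(k+1, 1-μ, s+1, x)/F(k, -μ, s, x))`
solves `P_VI(k²/2, -(μ+s)²/2, (k-s+1)²/2, (1-μ²)/2)`. -/
theorem y1_solves_painleveVI (k μ s : ℂ) (hs : ∀ m : ℕ, s ≠ -(m : ℂ))
    (U : Set ℂ) (hU : IsOpen U) (hUball : U ⊆ Metric.ball (0 : ℂ) 1)
    (hreg : ∀ x ∈ U, x ≠ 0 ∧ x ≠ 1 ∧ hypF k (-μ) s x ≠ 0 ∧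
      y1 k μ s x ≠ 0 ∧ y1 k μ s x ≠ 1 ∧ y1 k μ s x ≠ x) :
    SolvesPVI (k ^ 2 / 2) (-(μ + s) ^ 2 / 2) ((k - s + 1) ^ 2 / 2)
      ((1 - μ ^ 2) / 2) U (y1 k μ s) := by
  have hy (x) (hx : x ∈ U) : HasDerivAt (y1 k μ s)
      (painleveVIRiccati (-k) (μ + s) (k - s + 1) x (y1 k μ s x)) x :=
    hasDerivAt_y1 hs (by simpa using hUball hx) (hreg x hx).1 (hreg x hx).2.2.1
  have hsum : -k + (μ + s) + (k - s + 1) + -μ = 1 := by ring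
  simpa only [neg_sq] using solvesPVI_of_hasDerivAt_painleveVIRiccati hsum hU
    (fun x hx ↦ ⟨(hreg x hx).1, (hreg x hx).2.1, (hreg x hx).2.2.2⟩) hy
end

section
/- Let β, γ ∈ ℂ and let U ⊆ ℂ be an open set. Suppose y : ℂ → ℂ is twice differentiable on U, satisfies (y'(x))² = (2(y(x)−x)²/(x²(x−1)²))·((β+γ)·y(x) − β) for all x ∈ U, and for every x ∈ U one has x ≠ 0, x ≠ 1, y(x) ∉ {0, 1, x}, and y'(x) ≠ (y(x)−x)·(2y(x)−1)/(x(x−1))·0 + 0 is not required—only additionally assume y'(x) is such that the first-order relation can be differentiated, i.e. (β+γ)y(x) − β ≠ 0. Then y solves P_VI(0, β, γ, 0) on U. -/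
/-!
Where `y' ≠ 0`, the first-order relation says that `y'^2` is a constant times `r^2 * l`, where
`r = (y - x) / (x(x - 1))` and `l = (β + γ)y - β`. Comparing logarithmic derivatives gives `y''/y'`,
and multiplying by `y'` turns the contribution `y' l'/(2l)` of `l` into `(β + γ)r^2` by the relation
itself, so that
`y'' = y'^2/(y - x) - (1/x + 1/(x - 1) + 1/(y - x))y' + (β + γ)(y - x)^2/(x^2(x - 1)^2)`.
The terms linear in `y'` are already those of Painlevé VI; eliminating `y'^2` from the difference of
the remaining ones leaves a rational identity in `x` and `y`.
-/

section LogDeriv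

open scoped Topology

variable {𝕜 : Type*} [NontriviallyNormedField 𝕜]

lemma two_mul_logDeriv_of_sq_eventuallyEq {𝕜' : Type*} [NontriviallyNormedField 𝕜']
    [NormedAlgebra 𝕜 𝕜'] {f r l : 𝕜 → 𝕜'} {c : 𝕜'} {x : 𝕜}
    (h : (fun z ↦ f z ^ 2) =ᶠ[𝓝 x] fun z ↦ c * (r z ^ 2 * l z))
    (hf : DifferentiableAt 𝕜 f x) (hr : DifferentiableAt 𝕜 r x) (hl : DifferentiableAt 𝕜 l x)
    (hc : c ≠ 0) (hrx : r x ≠ 0) (hlx : l x ≠ 0) :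
    2 * logDeriv f x = 2 * logDeriv r x + logDeriv l x :=
  calc
    2 * logDeriv f x = logDeriv (fun z ↦ f z ^ 2) x := by
      rw [logDeriv_fun_pow hf, Nat.cast_ofNat]
    _ = logDeriv (fun z ↦ c * (r z ^ 2 * l z)) x := (logDeriv_congr_nhds h).eq_of_nhds
    _ = 2 * logDeriv r x + logDeriv l x := by
      rw [logDeriv_const_mul x c hc, logDeriv_mul (f := fun z ↦ r z ^ 2) x (pow_ne_zero 2 hrx) hlx
          (hr.fun_pow 2) hl,
        logDeriv_fun_pow hr, Nat.cast_ofNat]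

lemma logDeriv_sub_id_div_mul_sub_one {y : 𝕜 → 𝕜} {x : 𝕜} (hy : DifferentiableAt 𝕜 y x)
    (hx0 : x ≠ 0) (hx1 : x ≠ 1) (hyx : y x ≠ x) :
    logDeriv (fun z ↦ (y z - z) / (z * (z - 1))) x
      = (deriv y x - 1) / (y x - x) - (1 / x + 1 / (x - 1)) := by
  have hx1' : x - 1 ≠ 0 := sub_ne_zero.mpr hx1
  have h_num : logDeriv (fun z ↦ y z - z) x = (deriv y x - 1) / (y x - x) := by
    rw [logDeriv_apply, deriv_fun_sub hy differentiableAt_fun_id, deriv_id'']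
  have h_den : logDeriv (fun z ↦ z * (z - 1)) x = 1 / x + 1 / (x - 1) := by
    rw [logDeriv_mul x hx0 hx1' (by fun_prop) (by fun_prop), logDeriv_id', logDeriv_apply,
      deriv_sub_const, deriv_id'']
  rw [logDeriv_div (f := fun z ↦ y z - z) (g := fun z ↦ z * (z - 1)) x (sub_ne_zero.mpr hyx)
    (mul_ne_zero hx0 hx1') (by fun_prop) (by fun_prop), h_num, h_den]

variable [NeZero (2 : 𝕜)] {y : 𝕜 → 𝕜} {a b x : 𝕜}

lemma two_mul_logDeriv_deriv_of_sq_deriv_eventuallyEq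
    (h : (fun z ↦ deriv y z ^ 2)
      =ᶠ[𝓝 x] fun z ↦ 2 * (y z - z) ^ 2 / (z ^ 2 * (z - 1) ^ 2) * (a * y z - b))
    (hy : DifferentiableAt 𝕜 y x) (hy' : DifferentiableAt 𝕜 (deriv y) x)
    (hx0 : x ≠ 0) (hx1 : x ≠ 1) (hyx : y x ≠ x) (hl : a * y x - b ≠ 0) :
    2 * logDeriv (deriv y) x
      = 2 * ((deriv y x - 1) / (y x - x) - (1 / x + 1 / (x - 1)))
        + a * deriv y x / (a * y x - b) := by
  have h_den : x * (x - 1) ≠ 0 := mul_ne_zero hx0 (sub_ne_zero.mpr hx1)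
  have h_factor : (fun z ↦ deriv y z ^ 2)
      =ᶠ[𝓝 x] fun z ↦ 2 * (((y z - z) / (z * (z - 1))) ^ 2 * (a * y z - b)) :=
    h.trans (.of_eq (funext fun z ↦ by rw [div_pow, mul_pow]; ring))
  rw [two_mul_logDeriv_of_sq_eventuallyEq h_factor hy' (by fun_prop (disch := exact h_den))
      (by fun_prop) two_ne_zero (div_ne_zero (sub_ne_zero.mpr hyx) h_den) hl,
    logDeriv_sub_id_div_mul_sub_one hy hx0 hx1 hyx, logDeriv_apply, deriv_sub_const,
    deriv_const_mul a hy]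

lemma deriv_deriv_eq_of_sq_deriv_eventuallyEq
    (h : (fun z ↦ deriv y z ^ 2)
      =ᶠ[𝓝 x] fun z ↦ 2 * (y z - z) ^ 2 / (z ^ 2 * (z - 1) ^ 2) * (a * y z - b))
    (hy : DifferentiableAt 𝕜 y x) (hy' : DifferentiableAt 𝕜 (deriv y) x)
    (hx0 : x ≠ 0) (hx1 : x ≠ 1) (hyx : y x ≠ x) (hl : a * y x - b ≠ 0) :
    deriv (deriv y) x = deriv y x ^ 2 / (y x - x)
      - (1 / x + 1 / (x - 1) + 1 / (y x - x)) * deriv y x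
      + a * (y x - x) ^ 2 / (x ^ 2 * (x - 1) ^ 2) := by
  have h_log := two_mul_logDeriv_deriv_of_sq_deriv_eventuallyEq h hy hy' hx0 hx1 hyx hl
  have hx1' : x - 1 ≠ 0 := sub_ne_zero.mpr hx1
  have hyx' : y x - x ≠ 0 := sub_ne_zero.mpr hyx
  have h2 : (2 : 𝕜) ≠ 0 := two_ne_zero
  have h_sq : deriv y x ^ 2 = 2 * (y x - x) ^ 2 / (x ^ 2 * (x - 1) ^ 2) * (a * y x - b) :=
    h.eq_of_nhds
  have hp : deriv y x ≠ 0 := by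
    rw [← pow_ne_zero_iff two_ne_zero, h_sq]
    simp [*]
  have h_l : deriv y x * (a * deriv y x / (a * y x - b))
      = 2 * (a * (y x - x) ^ 2 / (x ^ 2 * (x - 1) ^ 2)) := by
    rw [mul_div_assoc', mul_left_comm, ← sq, h_sq]
    field_simp
  have h_mul : deriv y x * logDeriv (deriv y) x = deriv (deriv y) x :=
    mul_div_cancel₀ _ hp
  apply mul_left_cancel₀ h2
  linear_combination deriv y x * h_log + h_l - 2 * h_mul

end LogDeriv

lemma painleveVI_rhs_eq_of_sq_eq {K : Type*} [Field K] [NeZero (2 : K)] {β γ x w p : K}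
    (hw0 : w ≠ 0) (hw1 : w ≠ 1) (hwx : w ≠ x)
    (hp : p ^ 2 = 2 * (w - x) ^ 2 / (x ^ 2 * (x - 1) ^ 2) * ((β + γ) * w - β)) :
    1 / 2 * (1 / w + 1 / (w - 1) + 1 / (w - x)) * p ^ 2
        - (1 / x + 1 / (x - 1) + 1 / (w - x)) * p
        + w * (w - 1) * (w - x) / (x ^ 2 * (x - 1) ^ 2)
          * (β * x / w ^ 2 + γ * (x - 1) / (w - 1) ^ 2)
      = p ^ 2 / (w - x) - (1 / x + 1 / (x - 1) + 1 / (w - x)) * p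
        + (β + γ) * (w - x) ^ 2 / (x ^ 2 * (x - 1) ^ 2) := by
  have hw1' : w - 1 ≠ 0 := sub_ne_zero.mpr hw1
  have hwx' : w - x ≠ 0 := sub_ne_zero.mpr hwx
  have h2 : (2 : K) ≠ 0 := two_ne_zero
  have h_elim : 1 / 2 * (1 / w + 1 / (w - 1) + 1 / (w - x)) * p ^ 2
        + w * (w - 1) * (w - x) / (x ^ 2 * (x - 1) ^ 2)
          * (β * x / w ^ 2 + γ * (x - 1) / (w - 1) ^ 2)
      = p ^ 2 / (w - x) + (β + γ) * (w - x) ^ 2 / (x ^ 2 * (x - 1) ^ 2) := by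
    rw [hp]
    field_simp
    ring
  linear_combination h_elim

/-- **The case `α = δ = 0`** (Garnier, Gromak–Lukashevich): if `y` satisfies
`(y')² = (2(y-x)²/(x²(x-1)²))((β+γ)y - β)` on an open set `U` (with the indicated
nondegeneracy conditions), then `y` solves `P_VI(0, β, γ, 0)` on `U`. -/
theorem firstOrder_solves_painleveVI (β γ : ℂ) (U : Set ℂ) (hU : IsOpen U)
    (y : ℂ → ℂ)
    (hy1 : ∀ x ∈ U, DifferentiableAt ℂ y x)
    (hy2 : ∀ x ∈ U, DifferentiableAt ℂ (deriv y) x)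
    (heq : ∀ x ∈ U, (deriv y x) ^ 2
      = (2 * (y x - x) ^ 2 / (x ^ 2 * (x - 1) ^ 2)) * ((β + γ) * y x - β))
    (hreg : ∀ x ∈ U, x ≠ 0 ∧ x ≠ 1 ∧ y x ≠ 0 ∧ y x ≠ 1 ∧ y x ≠ x ∧
      (β + γ) * y x - β ≠ 0) :
    SolvesPVI 0 β γ 0 U y := by
  refine ⟨hy1, hy2, fun x hx ↦ ?_⟩
  obtain ⟨hx0, hx1, hyx0, hyx1, hyx, hl⟩ := hreg x hx
  refine ⟨hx0, hx1, hyx0, hyx1, hyx, ?_⟩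
  have h_deriv := deriv_deriv_eq_of_sq_deriv_eventuallyEq
    (Filter.eventuallyEq_of_mem (hU.mem_nhds hx) heq) (hy1 x hx) (hy2 x hx) hx0 hx1 hyx hl
  simpa only [zero_add, zero_mul, zero_div, add_zero] using
    h_deriv.trans (painleveVI_rhs_eq_of_sq_eq hyx0 hyx1 hyx (heq x hx)).symm
end

section
/- Let β, γ ∈ ℂ with β + γ ≠ 0, and let U ⊆ ℂ be an open set on which x ≠ 0 and x ≠ 1. Suppose u : ℂ → ℂ is twice differentiable on U, u(x) ≠ 0 on U, and u satisfies u''(x) + ((2x−1)/(x(x−1)))·u'(x) − (1/(x²(x−1)²))·((β+γ)x/2 − β/2)·u(x) = 0 on U. Then the function y(x) = β/(β+γ) + 2x²(x−1)²·(u'(x))²/((β+γ)·u(x)²) satisfies (y'(x))² = (2(y(x)−x)²/(x²(x−1)²))·((β+γ)·y(x) − β) for all x ∈ U. -/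
/-!
Linear second-order equations become Riccati equations under `w = u' / u`. Here the coefficient of
`u'` is `q' / q` for `q = x (x - 1)`, so the weighted logarithmic derivative `φ = q w` satisfies a
Riccati equation without linear term, `q φ' = ((β + γ) x - β) / 2 - φ ^ 2`. Since `y` is
determined by `(β + γ) y - β = 2 φ ^ 2`, this reads `q φ' = (β + γ) (x - y) / 2`. Hence
`q y' = 2 φ (x - y)`, and squaring eliminates `φ`.
-/

section Riccati

variable {𝕜 𝕜' : Type*} [NontriviallyNormedField 𝕜] [NontriviallyNormedField 𝕜']
  [NormedAlgebra 𝕜 𝕜'] {u q : 𝕜 → 𝕜'} {x : 𝕜} {a b : 𝕜'}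

theorem hasDerivAt_logDeriv (hu : DifferentiableAt 𝕜 u x) (hu' : DifferentiableAt 𝕜 (deriv u) x)
    (hux : u x ≠ 0) :
    HasDerivAt (logDeriv u) (deriv (deriv u) x / u x - logDeriv u x ^ 2) x := by
  refine (hu'.hasDerivAt.div hu.hasDerivAt hux).congr_deriv ?_
  rw [logDeriv_apply]
  field_simp

theorem hasDerivAt_logDeriv_of_linear (hu : DifferentiableAt 𝕜 u x)
    (hu' : DifferentiableAt 𝕜 (deriv u) x) (hux : u x ≠ 0)
    (heq : deriv (deriv u) x + a * deriv u x - b * u x = 0) :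
    HasDerivAt (logDeriv u) (b - a * logDeriv u x - logDeriv u x ^ 2) x := by
  have hdiv : deriv (deriv u) x / u x = b - a * logDeriv u x := by
    rw [logDeriv_apply]
    field_simp
    linear_combination heq
  exact hdiv ▸ hasDerivAt_logDeriv hu hu' hux

theorem hasDerivAt_mul_logDeriv_of_linear (hq : HasDerivAt q (a * q x) x)
    (hu : DifferentiableAt 𝕜 u x) (hu' : DifferentiableAt 𝕜 (deriv u) x) (hux : u x ≠ 0)
    (heq : deriv (deriv u) x + a * deriv u x - b * u x = 0) :
    HasDerivAt (fun z ↦ q z * logDeriv u z) (q x * (b - logDeriv u x ^ 2)) x :=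
  (hq.mul (hasDerivAt_logDeriv_of_linear hu hu' hux heq)).congr_deriv (by ring)

end Riccati

section FirstOrder

variable {𝕜 : Type*} [NontriviallyNormedField 𝕜] {β γ x : 𝕜} {u : 𝕜 → 𝕜}

/-- The logarithmic derivative of `u` weighted by the integrating factor `x (x - 1)` of the linear
equation, so that its Riccati equation has no linear term; written `φ` above. -/
noncomputable def weightedLogDeriv (u : 𝕜 → 𝕜) (x : 𝕜) : 𝕜 :=
  x * (x - 1) * logDeriv u x

/-- The function `y` built from a solution `u` of the linear equation, which solves the first-order
equation. It is meaningful only where `β + γ` and `u x` are nonzero. -/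
noncomputable def firstOrderSolution (β γ : 𝕜) (u : 𝕜 → 𝕜) (x : 𝕜) : 𝕜 :=
  β / (β + γ) + 2 * x ^ 2 * (x - 1) ^ 2 * (deriv u x) ^ 2 / ((β + γ) * (u x) ^ 2)

theorem firstOrderSolution_eq (β γ : 𝕜) (u : 𝕜 → 𝕜) (x : 𝕜) :
    firstOrderSolution β γ u x = β / (β + γ) + 2 / (β + γ) * weightedLogDeriv u x ^ 2 := by
  rw [firstOrderSolution, weightedLogDeriv, logDeriv_apply, ← mul_div_assoc, div_pow,
    div_mul_div_comm]
  ring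

theorem mul_firstOrderSolution_sub (hβγ : β + γ ≠ 0) (u : 𝕜 → 𝕜) (x : 𝕜) :
    (β + γ) * firstOrderSolution β γ u x - β = 2 * weightedLogDeriv u x ^ 2 := by
  rw [firstOrderSolution_eq]
  field_simp
  ring

theorem hasDerivAt_firstOrderSolution (β γ : 𝕜) {φ' : 𝕜}
    (hφ : HasDerivAt (weightedLogDeriv u) φ' x) :
    HasDerivAt (firstOrderSolution β γ u) (4 * weightedLogDeriv u x * φ' / (β + γ)) x := by
  have hy := ((hφ.fun_pow 2).const_mul (2 / (β + γ))).const_add (β / (β + γ))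
  refine (hy.congr_of_eventuallyEq (.of_forall (firstOrderSolution_eq β γ u))).congr_deriv ?_
  push_cast
  ring

variable [NeZero (2 : 𝕜)]

theorem hasDerivAt_weightedLogDeriv (hβγ : β + γ ≠ 0) (hx0 : x ≠ 0) (hx1 : x ≠ 1)
    (hu : DifferentiableAt 𝕜 u x) (hu' : DifferentiableAt 𝕜 (deriv u) x) (hux : u x ≠ 0)
    (heq : deriv (deriv u) x + ((2 * x - 1) / (x * (x - 1))) * deriv u x
      - (1 / (x ^ 2 * (x - 1) ^ 2)) * ((β + γ) * x / 2 - β / 2) * u x = 0) :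
    HasDerivAt (weightedLogDeriv u)
      ((β + γ) * (x - firstOrderSolution β γ u x) / (2 * (x * (x - 1)))) x := by
  have hx1' : x - 1 ≠ 0 := sub_ne_zero.mpr hx1
  have hq : HasDerivAt (fun z ↦ z * (z - 1)) ((2 * x - 1) / (x * (x - 1)) * (x * (x - 1))) x := by
    refine ((hasDerivAt_id' x).mul ((hasDerivAt_id' x).sub_const 1)).congr_deriv ?_
    rw [div_mul_cancel₀ _ (mul_ne_zero hx0 hx1')]
    ring
  refine (hasDerivAt_mul_logDeriv_of_linear hq hu hu' hux heq).congr_deriv ?_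
  have hy := mul_firstOrderSolution_sub hβγ u x
  rw [weightedLogDeriv] at hy
  field_simp
  linear_combination hy

theorem linear_to_firstOrder_general (hβγ : β + γ ≠ 0) (hx0 : x ≠ 0) (hx1 : x ≠ 1)
    (hu : DifferentiableAt 𝕜 u x) (hu' : DifferentiableAt 𝕜 (deriv u) x) (hux : u x ≠ 0)
    (heq : deriv (deriv u) x + ((2 * x - 1) / (x * (x - 1))) * deriv u x
      - (1 / (x ^ 2 * (x - 1) ^ 2)) * ((β + γ) * x / 2 - β / 2) * u x = 0) :
    deriv (firstOrderSolution β γ u) x ^ 2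
      = 2 * (firstOrderSolution β γ u x - x) ^ 2 / (x ^ 2 * (x - 1) ^ 2)
        * ((β + γ) * firstOrderSolution β γ u x - β) := by
  set y := firstOrderSolution β γ u x
  set φ := weightedLogDeriv u x
  have hφ := hasDerivAt_weightedLogDeriv hβγ hx0 hx1 hu hu' hux heq
  have hy : deriv (firstOrderSolution β γ u) x = 2 * φ * (x - y) / (x * (x - 1)) := by
    rw [(hasDerivAt_firstOrderSolution β γ hφ).deriv]
    field_simp
    ring
  calc deriv (firstOrderSolution β γ u) x ^ 2
      = 2 * (y - x) ^ 2 / (x ^ 2 * (x - 1) ^ 2) * (2 * φ ^ 2) := by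
        rw [hy, div_pow, mul_pow x]
        ring
    _ = 2 * (y - x) ^ 2 / (x ^ 2 * (x - 1) ^ 2) * ((β + γ) * y - β) := by
        rw [mul_firstOrderSolution_sub hβγ]

end FirstOrder

/-- Linearization in the case `α = δ = 0`: if `u` is a nonvanishing twice
differentiable solution of
`u'' + ((2x-1)/(x(x-1))) u' - (1/(x²(x-1)²))((β+γ)x/2 - β/2) u = 0` on `U`,
then `y = β/(β+γ) + 2x²(x-1)²(u')²/((β+γ)u²)` satisfies
`(y')² = (2(y-x)²/(x²(x-1)²))((β+γ)y - β)` on `U`. -/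
theorem linear_to_firstOrder (β γ : ℂ) (hβγ : β + γ ≠ 0)
    (U : Set ℂ) (hU : IsOpen U) (hreg : ∀ x ∈ U, x ≠ 0 ∧ x ≠ 1)
    (u : ℂ → ℂ) (hu1 : ∀ x ∈ U, DifferentiableAt ℂ u x)
    (hu2 : ∀ x ∈ U, DifferentiableAt ℂ (deriv u) x)
    (hune : ∀ x ∈ U, u x ≠ 0)
    (heq : ∀ x ∈ U,
      deriv (deriv u) x + ((2 * x - 1) / (x * (x - 1))) * deriv u x
        - (1 / (x ^ 2 * (x - 1) ^ 2)) * ((β + γ) * x / 2 - β / 2) * u x = 0) :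
    ∀ x ∈ U,
      (deriv (fun z =>
          β / (β + γ) + 2 * z ^ 2 * (z - 1) ^ 2 * (deriv u z) ^ 2
            / ((β + γ) * (u z) ^ 2)) x) ^ 2
        = (2 * ((β / (β + γ) + 2 * x ^ 2 * (x - 1) ^ 2 * (deriv u x) ^ 2
              / ((β + γ) * (u x) ^ 2)) - x) ^ 2 / (x ^ 2 * (x - 1) ^ 2)) *
            ((β + γ) * (β / (β + γ) + 2 * x ^ 2 * (x - 1) ^ 2 * (deriv u x) ^ 2
              / ((β + γ) * (u x) ^ 2)) - β) :=
  fun x hx ↦ linear_to_firstOrder_general hβγ (hreg x hx).1 (hreg x hx).2 (hu1 x hx) (hu2 x hx)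
    (hune x hx) (heq x hx)
end
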